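/- Let n ≥ 3 and let Ω ⊆ ℝⁿ be a connected open set. Let φ : Ω → ℝ be a limiting Carleman weight, i.e. φ is smooth with nowhere-vanishing gradient and the vector field |∇φ|⁻²∇φ is a conformal Killing vector field on Ω. Then there exist a ∈ ℝ ∖ {0} and x₀ ∈ ℝⁿ such that, writing y = x − x₀, the vector field a·|∇φ(x)|⁻²∇φ(x) coincides on Ω with one of the following six vector fields: (1) γ, for some γ ∈ ℝⁿ with |γ| = 1; (2) y; (3) (γ∧σ)y, for some γ, σ ∈ ℝⁿ with |γ| = |σ| = 1 and γ·σ = 0; (4) (γ·y)y − (1/2)|y|²γ, for some unit γ; (5) (γ·y)y − (1/2)|y|²γ + (s/2)γ, for some unit γ and some s > 0; (6) (γ·y)y − (1/2)|y|²γ − (s/2)γ, for some unit γ and some s > 0. (These correspond respectively to the weights γ·x, log|x|, arctan((γ·x)/(σ·x)), −2(γ·x)/|x|², (1/√s)·arctan((−2γ·x/√s)/(|x|²/s − 1)), and (1/√s)·artanh((−2γ·x/√s)/(|x|²/s + 1)), translated by x₀ and composed with x ↦ ax + b.) -/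

import Mathlib

open scoped BigOperators
open Matrix

noncomputable section

/-- Euclidean dot product on `Fin n → ℝ`. -/
def dotp {n : ℕ} (u v : Fin n → ℝ) : ℝ := ∑ i, u i * v i

/-- Squared Euclidean norm on `Fin n → ℝ`. -/
def normSq {n : ℕ} (u : Fin n → ℝ) : ℝ := ∑ i, u i ^ 2

/-- `pd X j k x = ∂ⱼ Xₖ (x)`, the partial derivative of the `k`-th component of the
vector field `X` in the `j`-th coordinate direction. -/
def pd {n : ℕ} (X : (Fin n → ℝ) → (Fin n → ℝ)) (j k : Fin n) (x : Fin n → ℝ) : ℝ :=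
  fderiv ℝ (fun y => X y k) x (Pi.single j (1 : ℝ))

/-- `pdS f j x = ∂ⱼ f (x)` for a scalar function `f`. -/
def pdS {n : ℕ} (f : (Fin n → ℝ) → ℝ) (j : Fin n) (x : Fin n → ℝ) : ℝ :=
  fderiv ℝ f x (Pi.single j (1 : ℝ))

/-- Second partial derivative `pd2 X a b c x = ∂ₐ ∂_b X_c (x)`. -/
def pd2 {n : ℕ} (X : (Fin n → ℝ) → (Fin n → ℝ)) (a b c : Fin n) (x : Fin n → ℝ) : ℝ :=
  fderiv ℝ (fun y => pd X b c y) x (Pi.single a (1 : ℝ))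

/-- Gradient of a scalar function on `Fin n → ℝ`, as a vector field. -/
def grad {n : ℕ} (φ : (Fin n → ℝ) → ℝ) (x : Fin n → ℝ) : Fin n → ℝ :=
  fun i => fderiv ℝ φ x (Pi.single i (1 : ℝ))

/-- `X` is a conformal Killing vector field on `Ω`:
`∂ⱼXₖ + ∂ₖXⱼ = λ δⱼₖ` on `Ω` for some scalar function `λ`. -/
def IsCKF {n : ℕ} (Ω : Set (Fin n → ℝ)) (X : (Fin n → ℝ) → (Fin n → ℝ)) : Prop :=
  ∃ lam : (Fin n → ℝ) → ℝ, ∀ x ∈ Ω, ∀ j k : Fin n,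
    pd X j k x + pd X k j x = lam x * (if j = k then (1 : ℝ) else 0)

/-- The model conformal Killing field `X_{(α,c,B,γ)}(x) = (α·x)x − ½|x|²α + cx + Bx + γ`. -/
def Xmodel {n : ℕ} (α : Fin n → ℝ) (c : ℝ) (B : Matrix (Fin n) (Fin n) ℝ) (γ : Fin n → ℝ)
    (x : Fin n → ℝ) : Fin n → ℝ :=
  fun k => dotp α x * x k - (1 / 2) * normSq x * α k + c * x k + B.mulVec x k + γ k

/-- The skew-symmetric matrix `u ∧ v` with entries `(u∧v)ⱼₖ = uⱼvₖ − vⱼuₖ`. -/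
def wedge {n : ℕ} (u v : Fin n → ℝ) : Matrix (Fin n) (Fin n) ℝ :=
  Matrix.of fun j k => u j * v k - v j * u k

/-!
Comparing third derivatives shows that for `n ≥ 3` the conformal factor of a conformal Killing field
is affine (Liouville), whence `X = (α·x)x - ½|x|²α + cx + Bx + γ` with `B` skew-symmetric. A
multiple of a gradient satisfies the Frobenius condition `X♭ ∧ dX♭ = 0`, which for such an `X` is a
polynomial identity and so holds on all of `ℝⁿ`, where it can be evaluated freely. If `α = 0` and
`B ≠ 0`, it forces `c = 0`, `B` to be a multiple of a `u ∧ v`, and `γ` to lie in the range of `B`,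
so that a translation removes `γ`. If `α ≠ 0`, a translation achieves `c = 0` and `Bα = 0`; the
identity then gives `B = 0` and `γ = tα`, and the sign of `t` separates the last three forms.
-/

section Skew

variable {ι R : Type*} [CommRing R]

/-- `M ∧ ξ = 0`, where a skew-symmetric matrix `M` is read as a 2-form and `ξ` as a 1-form; the
condition is stated on triples of coordinate vectors. -/
def WedgeVanishes (M : Matrix ι ι R) (ξ : ι → R) : Prop :=
  ∀ j k l, M j k * ξ l + M k l * ξ j + M l j * ξ k = 0

theorem WedgeVanishes.sub {M : Matrix ι ι R} {ξ η : ι → R} (hξ : WedgeVanishes M ξ)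
    (hη : WedgeVanishes M η) : WedgeVanishes M (ξ - η) := fun j k l => by
  simp only [Pi.sub_apply]
  linear_combination hξ j k l - hη j k l

variable [Fintype ι]

theorem WedgeVanishes.apply {M : Matrix ι ι R} {ξ : ι → R} (h : WedgeVanishes M ξ)
    (u v w : ι → R) :
    (u ⬝ᵥ M *ᵥ v) * (ξ ⬝ᵥ w) + (v ⬝ᵥ M *ᵥ w) * (ξ ⬝ᵥ u) + (w ⬝ᵥ M *ᵥ u) * (ξ ⬝ᵥ v) = 0 := by
  have expand (a b c : ι → R) : (a ⬝ᵥ M *ᵥ b) * (ξ ⬝ᵥ c) =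
      ∑ l, ∑ j, ∑ k, c l * a j * b k * (M j k * ξ l) := by
    simp only [dotProduct, mulVec, Finset.mul_sum, Finset.sum_mul]
    exact Finset.sum_congr rfl fun l _ => Finset.sum_congr rfl fun j _ =>
      Finset.sum_congr rfl fun k _ => by ring
  rw [(expand u v w).trans (Finset.sum_comm_cycle.trans Finset.sum_comm_cycle), expand v w u,
    (expand w u v).trans Finset.sum_comm_cycle]
  simp only [← Finset.sum_add_distrib]
  refine Finset.sum_eq_zero fun j _ => Finset.sum_eq_zero fun k _ =>
    Finset.sum_eq_zero fun l _ => ?_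
  linear_combination u j * v k * w l * h j k l

variable {B : Matrix ι ι R}

theorem dotProduct_mulVec_of_skew (hB : Bᵀ = -B) (u v : ι → R) :
    u ⬝ᵥ B *ᵥ v = -(v ⬝ᵥ B *ᵥ u) := by
  rw [dotProduct_mulVec, ← mulVec_transpose, hB, neg_mulVec, neg_dotProduct, dotProduct_comm]

theorem WedgeVanishes.smul_eq_of_skew {ξ : ι → R} (h : WedgeVanishes B ξ) (hB : Bᵀ = -B)
    (p q : ι → R) :
    (p ⬝ᵥ B *ᵥ q) • ξ = (ξ ⬝ᵥ p) • (B *ᵥ q) - (ξ ⬝ᵥ q) • (B *ᵥ p) := by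
  refine dotProduct_eq _ _ fun w => ?_
  simp only [sub_dotProduct, smul_dotProduct, smul_eq_mul, dotProduct_comm (B *ᵥ _) w]
  have eval := h.apply p q w
  rw [dotProduct_mulVec_of_skew hB q w] at eval
  linear_combination eval

theorem dotProduct_mulVec_self_of_skew [IsDomain R] [CharZero R] (hB : Bᵀ = -B) (u : ι → R) :
    u ⬝ᵥ B *ᵥ u = 0 :=
  self_eq_neg.mp (dotProduct_mulVec_of_skew hB u u)

theorem exists_dotProduct_mulVec_ne_zero (hB : B ≠ 0) : ∃ p q : ι → R, p ⬝ᵥ B *ᵥ q ≠ 0 := by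
  classical
  contrapose! hB
  ext j k
  simpa using hB (Pi.single j 1) (Pi.single k 1)

end Skew

theorem exists_ne_zero_dotProduct_pair_eq_zero {K : Type*} [Field K] {n : ℕ} (hn : 2 < n)
    (u v : Fin n → K) : ∃ w ≠ 0, u ⬝ᵥ w = 0 ∧ v ⬝ᵥ w = 0 := by
  have hker : (Matrix.of ![u, v]).mulVecLin.ker ≠ ⊥ :=
    LinearMap.ker_ne_bot_of_finrank_lt (by simpa using hn)
  obtain ⟨w, hw, hw0⟩ := Submodule.exists_mem_ne_zero_of_ne_bot hker
  exact ⟨w, hw0, congrFun hw 0, congrFun hw 1⟩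

section Normalisation

variable {n : ℕ}

theorem dotp_eq_dotProduct (u v : Fin n → ℝ) : dotp u v = u ⬝ᵥ v := rfl

theorem normSq_eq_dotProduct (u : Fin n → ℝ) : normSq u = u ⬝ᵥ u := by
  simp [normSq, dotProduct, sq]

theorem dotProduct_self_pos {u : Fin n → ℝ} (hu : u ≠ 0) : 0 < u ⬝ᵥ u := by
  simpa using dotProduct_self_star_pos_iff.mpr hu

theorem normSq_ne_zero {u : Fin n → ℝ} (hu : u ≠ 0) : normSq u ≠ 0 :=
  normSq_eq_dotProduct u ▸ (dotProduct_self_pos hu).ne'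

theorem exists_normSq_smul_eq_one {u : Fin n → ℝ} (hu : u ≠ 0) :
    ∃ r : ℝ, r ≠ 0 ∧ normSq (r • u) = 1 := by
  have hpos := dotProduct_self_pos hu
  refine ⟨(√(u ⬝ᵥ u))⁻¹, by positivity, ?_⟩
  rw [normSq_eq_dotProduct, smul_dotProduct, dotProduct_smul, smul_smul, ← mul_inv,
    Real.mul_self_sqrt hpos.le, smul_eq_mul, inv_mul_cancel₀ hpos.ne']

theorem wedge_mulVec (u v y : Fin n → ℝ) :
    wedge u v *ᵥ y = (v ⬝ᵥ y) • u - (u ⬝ᵥ y) • v := by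
  ext k
  simp only [wedge, mulVec, dotProduct, of_apply, Pi.sub_apply, Pi.smul_apply, smul_eq_mul,
    Finset.sum_mul, ← Finset.sum_sub_distrib]
  exact Finset.sum_congr rfl fun i _ => by ring

theorem transpose_wedge (u v : Fin n → ℝ) : (wedge u v)ᵀ = -wedge u v := by
  ext j k
  simp [wedge, mul_comm]

theorem smul_wedge_smul (r s : ℝ) (u v : Fin n → ℝ) :
    wedge (r • u) (s • v) = (r * s) • wedge u v := by
  ext j k
  simp only [wedge, of_apply, Pi.smul_apply, Matrix.smul_apply, smul_eq_mul]
  ring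

theorem wedge_sub_smul_self (r : ℝ) (u v : Fin n → ℝ) : wedge u (v - r • u) = wedge u v := by
  ext j k
  simp only [wedge, of_apply, Pi.sub_apply, Pi.smul_apply, smul_eq_mul]
  ring

theorem exists_orthonormal_smul_wedge_eq {u v : Fin n → ℝ} (huv : wedge u v ≠ 0) :
    ∃ (r : ℝ) (γ σ : Fin n → ℝ), r ≠ 0 ∧ normSq γ = 1 ∧ normSq σ = 1 ∧ dotp γ σ = 0 ∧
      r • wedge u v = wedge γ σ := by
  have hu : u ≠ 0 := by
    rintro rfl
    exact huv (by ext; simp [wedge])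
  set v' := v - (u ⬝ᵥ v / (u ⬝ᵥ u)) • u with hv'
  have hwedge : wedge u v' = wedge u v := wedge_sub_smul_self _ u v
  have horth : u ⬝ᵥ v' = 0 := by
    rw [hv', dotProduct_sub, dotProduct_smul, smul_eq_mul,
      div_mul_cancel₀ _ (dotProduct_self_pos hu).ne', sub_self]
  have hv'0 : v' ≠ 0 := fun h =>
    huv (by rw [← hwedge, h]; ext; simp [wedge])
  obtain ⟨r, hr, hru⟩ := exists_normSq_smul_eq_one hu
  obtain ⟨s, hs, hsv⟩ := exists_normSq_smul_eq_one hv'0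
  refine ⟨r * s, r • u, s • v', mul_ne_zero hr hs, hru, hsv, ?_, ?_⟩
  · rw [dotp_eq_dotProduct, smul_dotProduct, dotProduct_smul, horth, smul_zero, smul_zero]
  · rw [smul_wedge_smul, hwedge]

end Normalisation

section ModelField

variable {n : ℕ} {α γ : Fin n → ℝ} {c : ℝ} {B : Matrix (Fin n) (Fin n) ℝ}

theorem Xmodel_eq (α : Fin n → ℝ) (c : ℝ) (B : Matrix (Fin n) (Fin n) ℝ) (γ x : Fin n → ℝ) :
    Xmodel α c B γ x =
      (α ⬝ᵥ x) • x - (1 / 2 * (x ⬝ᵥ x)) • α + c • x + B *ᵥ x + γ := by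
  ext k
  simp [Xmodel, dotp_eq_dotProduct, normSq_eq_dotProduct]

theorem Xmodel_dotProduct (α : Fin n → ℝ) (c : ℝ) (B : Matrix (Fin n) (Fin n) ℝ)
    (γ x w : Fin n → ℝ) :
    Xmodel α c B γ x ⬝ᵥ w = (α ⬝ᵥ x) * (x ⬝ᵥ w) - 1 / 2 * (x ⬝ᵥ x) * (α ⬝ᵥ w) + c * (x ⬝ᵥ w) +
      (B *ᵥ x) ⬝ᵥ w + γ ⬝ᵥ w := by
  simp only [Xmodel_eq, add_dotProduct, sub_dotProduct, smul_dotProduct, smul_eq_mul]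

theorem Xmodel_add (α : Fin n → ℝ) (c : ℝ) (B : Matrix (Fin n) (Fin n) ℝ) (γ y x₀ : Fin n → ℝ) :
    Xmodel α c B γ (y + x₀) =
      Xmodel α (c + α ⬝ᵥ x₀) (B + wedge x₀ α) (Xmodel α c B γ x₀) y := by
  ext k
  simp only [Xmodel_eq, add_mulVec, mulVec_add, wedge_mulVec, dotProduct_add, add_dotProduct,
    dotProduct_comm y x₀, Pi.add_apply, Pi.sub_apply, Pi.smul_apply, smul_eq_mul]
  ring

/-- The normal forms, up to scaling and translation, of a hypersurface-orthogonal conformal Killing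
field. In `special` the sign of `s` is free, so it covers the last three forms of the
classification. -/
inductive IsNormalForm {n : ℕ} : ((Fin n → ℝ) → Fin n → ℝ) → Prop
  | translation (γ : Fin n → ℝ) (hγ : normSq γ = 1) : IsNormalForm fun _ => γ
  | dilation : IsNormalForm fun y => y
  | rotation (γ σ : Fin n → ℝ) (hγ : normSq γ = 1) (hσ : normSq σ = 1) (hγσ : dotp γ σ = 0) :
      IsNormalForm fun y => wedge γ σ *ᵥ y
  | special (γ : Fin n → ℝ) (s : ℝ) (hγ : normSq γ = 1) :
      IsNormalForm fun y => dotp γ y • y - (1 / 2 * normSq y) • γ + (s / 2) • γ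

theorem eq_zero_of_wedgeVanishes_mulVec_add (hn : 2 < n) (hB : Bᵀ = -B) (hB0 : B ≠ 0)
    (h : ∀ y, WedgeVanishes B (c • y + B *ᵥ y)) : c = 0 := by
  obtain ⟨p, q, hpq⟩ := exists_dotProduct_mulVec_ne_zero hB0
  obtain ⟨u, hu0, hpu, hqu⟩ := exists_ne_zero_dotProduct_pair_eq_zero hn p q
  have eval := congrArg (u ⬝ᵥ ·) ((h u).smul_eq_of_skew hB p q)
  simp only [add_dotProduct, dotProduct_add, dotProduct_sub, smul_dotProduct, dotProduct_smul,
    smul_eq_mul, dotProduct_comm (B *ᵥ u), dotProduct_comm u p, dotProduct_comm u q, hpu, hqu,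
    dotProduct_mulVec_self_of_skew hB u, dotProduct_mulVec_of_skew hB p u,
    dotProduct_mulVec_of_skew hB q u] at eval
  have hprod : (p ⬝ᵥ B *ᵥ q) * (u ⬝ᵥ u) * c = 0 := by linear_combination eval
  exact (mul_eq_zero.mp hprod).resolve_left (mul_ne_zero hpq (dotProduct_self_pos hu0).ne')

theorem smul_eq_wedge_of_wedgeVanishes_mulVec (hB : Bᵀ = -B)
    (h : ∀ y, WedgeVanishes B (B *ᵥ y)) (p q : Fin n → ℝ) :
    (p ⬝ᵥ B *ᵥ q) • B = wedge (B *ᵥ p) (B *ᵥ q) := by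
  refine ext_of_mulVec_single fun i => ?_
  rw [smul_mulVec, (h _).smul_eq_of_skew hB p q, wedge_mulVec]
  simp only [dotProduct_comm (B *ᵥ Pi.single i 1), dotProduct_mulVec_of_skew hB _ (Pi.single i 1),
    dotProduct_comm _ (Pi.single i (1 : ℝ))]
  module

theorem WedgeVanishes.exists_mulVec_eq (h : WedgeVanishes B γ) (hB : Bᵀ = -B) (hB0 : B ≠ 0) :
    ∃ z, B *ᵥ z = γ := by
  obtain ⟨p, q, hpq⟩ := exists_dotProduct_mulVec_ne_zero hB0
  refine ⟨(p ⬝ᵥ B *ᵥ q)⁻¹ • ((γ ⬝ᵥ p) • q - (γ ⬝ᵥ q) • p), ?_⟩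
  rw [mulVec_smul, mulVec_sub, mulVec_smul, mulVec_smul, ← h.smul_eq_of_skew hB,
    inv_smul_smul₀ hpq]

theorem exists_isNormalForm_of_linear_ne_zero (hn : 2 < n) (hB : Bᵀ = -B) (hB0 : B ≠ 0)
    (h : ∀ y, WedgeVanishes B (c • y + B *ᵥ y + γ)) :
    ∃ (a : ℝ) (x₀ : Fin n → ℝ) (Y : (Fin n → ℝ) → Fin n → ℝ),
      a ≠ 0 ∧ IsNormalForm Y ∧ ∀ x, a • (c • x + B *ᵥ x + γ) = Y (x - x₀) := by
  have hγ : WedgeVanishes B γ := by simpa using h 0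
  have hlin (y) : WedgeVanishes B (c • y + B *ᵥ y) := by simpa using (h y).sub hγ
  obtain rfl : c = 0 := eq_zero_of_wedgeVanishes_mulVec_add hn hB hB0 hlin
  obtain ⟨z, rfl⟩ := hγ.exists_mulVec_eq hB hB0
  obtain ⟨p, q, hpq⟩ := exists_dotProduct_mulVec_ne_zero hB0
  have hwedge : (p ⬝ᵥ B *ᵥ q) • B = wedge (B *ᵥ p) (B *ᵥ q) :=
    smul_eq_wedge_of_wedgeVanishes_mulVec hB (by simpa using hlin) p q
  obtain ⟨r, γ, σ, hr, hγ1, hσ1, hγσ, hrB⟩ :=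
    exists_orthonormal_smul_wedge_eq (hwedge ▸ smul_ne_zero hpq hB0)
  refine ⟨r * (p ⬝ᵥ B *ᵥ q), -z, _, mul_ne_zero hr hpq, .rotation γ σ hγ1 hσ1 hγσ, fun x => ?_⟩
  rw [zero_smul, zero_add, ← mulVec_add, ← hrB, ← hwedge, smul_smul, smul_mulVec, sub_neg_eq_add]

theorem exists_isNormalForm_of_quadratic_eq_zero (hn : 2 < n) (hB : Bᵀ = -B)
    (hne : ∃ x, Xmodel 0 c B γ x ≠ 0) (h : ∀ y, WedgeVanishes (wedge 0 y - B) (Xmodel 0 c B γ y)) :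
    ∃ (a : ℝ) (x₀ : Fin n → ℝ) (Y : (Fin n → ℝ) → Fin n → ℝ),
      a ≠ 0 ∧ IsNormalForm Y ∧ ∀ x, a • Xmodel 0 c B γ x = Y (x - x₀) := by
  have hX (x) : Xmodel 0 c B γ x = c • x + B *ᵥ x + γ := by simp [Xmodel_eq]
  simp only [hX] at hne h ⊢
  by_cases hB0 : B = 0
  · subst hB0
    by_cases hc : c = 0
    · subst hc
      have hγ : γ ≠ 0 := by simpa using hne
      obtain ⟨r, hr, hrγ⟩ := exists_normSq_smul_eq_one hγ
      exact ⟨r, 0, _, hr, .translation _ hrγ, by simp⟩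
    · refine ⟨c⁻¹, -(c⁻¹ • γ), _, inv_ne_zero hc, .dilation, fun x => ?_⟩
      simp [hc]
  · refine exists_isNormalForm_of_linear_ne_zero hn hB hB0 fun y j k l => ?_
    have := h y j k l
    simp only [wedge, Matrix.sub_apply, of_apply, Pi.zero_apply] at this
    linear_combination -this

theorem exists_add_dotProduct_eq_zero_and_mulVec_eq_zero (hα : α ≠ 0) (hB : Bᵀ = -B) (c : ℝ) :
    ∃ x₀ : Fin n → ℝ, c + α ⬝ᵥ x₀ = 0 ∧ (B + wedge x₀ α) *ᵥ α = 0 := by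
  have hpos := dotProduct_self_pos hα
  set x₀ : Fin n → ℝ := -(α ⬝ᵥ α)⁻¹ • (B *ᵥ α + c • α) with hx₀
  have hαx₀ : α ⬝ᵥ x₀ = -c := by
    rw [hx₀, dotProduct_smul, dotProduct_add, dotProduct_mulVec_self_of_skew hB, dotProduct_smul,
      smul_eq_mul, smul_eq_mul]
    field_simp
    ring
  refine ⟨x₀, by rw [hαx₀, add_neg_cancel], ?_⟩
  rw [add_mulVec, wedge_mulVec, dotProduct_comm x₀, hαx₀, hx₀, smul_smul, mul_neg,
    mul_inv_cancel₀ hpos.ne']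
  module

theorem mulVec_eq_zero_of_wedgeVanishes (hα : α ≠ 0) (hB : Bᵀ = -B) (hBα : B *ᵥ α = 0)
    (h : ∀ y, WedgeVanishes (wedge α y - B) (Xmodel α 0 B γ y)) {y : Fin n → ℝ}
    (hy : α ⬝ᵥ y = 0) : B *ᵥ y = 0 := by
  by_cases hy0 : y = 0
  · rw [hy0, mulVec_zero]
  have hyα : y ⬝ᵥ α = 0 := dotProduct_comm α y ▸ hy
  have hαB (v) : α ⬝ᵥ B *ᵥ v = 0 := by
    rw [dotProduct_mulVec_of_skew hB, hBα, dotProduct_zero, neg_zero]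
  have hyB : y ⬝ᵥ B *ᵥ y = 0 := dotProduct_mulVec_self_of_skew hB y
  have hyBB : y ⬝ᵥ B *ᵥ (B *ᵥ y) = -((B *ᵥ y) ⬝ᵥ B *ᵥ y) := dotProduct_mulVec_of_skew hB _ _
  have eval (t : ℝ) : t * (α ⬝ᵥ α) * (y ⬝ᵥ y) * (t * ((B *ᵥ y) ⬝ᵥ B *ᵥ y) + γ ⬝ᵥ B *ᵥ y) +
      ((B *ᵥ y) ⬝ᵥ B *ᵥ y) * (γ ⬝ᵥ α - 1 / 2 * t ^ 2 * (y ⬝ᵥ y) * (α ⬝ᵥ α)) = 0 := by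
    have := (h (t • y)).apply α y (B *ᵥ y)
    simp only [Xmodel_dotProduct, sub_mulVec, wedge_mulVec, mulVec_smul, dotProduct_sub,
      dotProduct_smul, smul_dotProduct, smul_eq_mul, dotProduct_comm (B *ᵥ y) α,
      dotProduct_comm (B *ᵥ y) y, hy, hyα, hαB, hyB, hyBB, hBα, dotProduct_zero] at this
    linear_combination this
  -- The left-hand side of `eval` has `t²`-coefficient `½ |α|² |y|² |B y|²`.
  have hzero : (α ⬝ᵥ α) * (y ⬝ᵥ y) * ((B *ᵥ y) ⬝ᵥ B *ᵥ y) = 0 := by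
    linear_combination eval 1 + eval (-1) - 2 * eval 0
  simpa [(dotProduct_self_pos hα).ne', (dotProduct_self_pos hy0).ne'] using hzero

theorem eq_zero_of_wedgeVanishes (hα : α ≠ 0) (hB : Bᵀ = -B) (hBα : B *ᵥ α = 0)
    (h : ∀ y, WedgeVanishes (wedge α y - B) (Xmodel α 0 B γ y)) : B = 0 := by
  refine ext_of_mulVec_single fun i => ?_
  set v : Fin n → ℝ := Pi.single i 1
  have horth : α ⬝ᵥ (v - (α ⬝ᵥ v / (α ⬝ᵥ α)) • α) = 0 := by
    rw [dotProduct_sub, dotProduct_smul, smul_eq_mul,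
      div_mul_cancel₀ _ (dotProduct_self_pos hα).ne', sub_self]
  have := mulVec_eq_zero_of_wedgeVanishes hα hB hBα h horth
  rwa [mulVec_sub, mulVec_smul, hBα, smul_zero, sub_zero, ← zero_mulVec v] at this

theorem exists_eq_smul_of_wedgeVanishes (hn : 2 < n) (hα : α ≠ 0)
    (h : ∀ y, WedgeVanishes (wedge α y) (Xmodel α 0 0 γ y)) : ∃ t : ℝ, γ = t • α := by
  obtain ⟨y, hy0, hαy, hγy⟩ := exists_ne_zero_dotProduct_pair_eq_zero hn α γ
  have hyα : y ⬝ᵥ α = 0 := dotProduct_comm α y ▸ hαy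
  have hα0 := (dotProduct_self_pos hα).ne'
  refine ⟨γ ⬝ᵥ α / (α ⬝ᵥ α), dotProduct_eq _ _ fun w => ?_⟩
  have eval := (h y).apply α y w
  simp only [Xmodel_dotProduct, wedge_mulVec, zero_mulVec, zero_dotProduct, dotProduct_sub,
    dotProduct_smul, smul_eq_mul, hαy, hyα, hγy] at eval
  have hzero : (y ⬝ᵥ y) * ((α ⬝ᵥ α) * (γ ⬝ᵥ w) - (γ ⬝ᵥ α) * (α ⬝ᵥ w)) = 0 := by
    linear_combination eval
  have := (mul_eq_zero.mp hzero).resolve_left (dotProduct_self_pos hy0).ne'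
  rw [smul_dotProduct, smul_eq_mul, div_mul_eq_mul_div, eq_div_iff hα0]
  linear_combination this

theorem exists_Xmodel_eq_of_quadratic_ne_zero (hn : 2 < n) (hα : α ≠ 0) (hB : Bᵀ = -B)
    (h : ∀ y, WedgeVanishes (wedge α y - B) (Xmodel α c B γ y)) :
    ∃ (x₀ : Fin n → ℝ) (t : ℝ), ∀ x, Xmodel α c B γ x = Xmodel α 0 0 (t • α) (x - x₀) := by
  obtain ⟨x₀, hc, hBα⟩ := exists_add_dotProduct_eq_zero_and_mulVec_eq_zero hα hB c
  have htrans (y) : Xmodel α c B γ (y + x₀) =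
      Xmodel α 0 (B + wedge x₀ α) (Xmodel α c B γ x₀) y := by rw [Xmodel_add, hc]
  have hcond (y) : WedgeVanishes (wedge α y - (B + wedge x₀ α))
      (Xmodel α 0 (B + wedge x₀ α) (Xmodel α c B γ x₀) y) := by
    have hmatrix : wedge α y - (B + wedge x₀ α) = wedge α (y + x₀) - B := by
      ext j k
      simp only [wedge, Matrix.sub_apply, Matrix.add_apply, of_apply, Pi.add_apply]
      ring
    rw [← htrans, hmatrix]
    exact h (y + x₀)
  have hB' : B + wedge x₀ α = 0 := eq_zero_of_wedgeVanishes hα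
    (by rw [transpose_add, hB, transpose_wedge, neg_add]) hBα hcond
  simp only [hB', sub_zero] at hcond htrans
  obtain ⟨t, ht⟩ := exists_eq_smul_of_wedgeVanishes hn hα hcond
  exact ⟨x₀, t, fun x => by rw [← ht, ← htrans, sub_add_cancel]⟩

theorem exists_isNormalForm_Xmodel (hn : 2 < n) (hB : Bᵀ = -B)
    (hne : ∃ x, Xmodel α c B γ x ≠ 0) (h : ∀ y, WedgeVanishes (wedge α y - B) (Xmodel α c B γ y)) :
    ∃ (a : ℝ) (x₀ : Fin n → ℝ) (Y : (Fin n → ℝ) → Fin n → ℝ),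
      a ≠ 0 ∧ IsNormalForm Y ∧ ∀ x, a • Xmodel α c B γ x = Y (x - x₀) := by
  by_cases hα : α = 0
  · subst hα
    exact exists_isNormalForm_of_quadratic_eq_zero hn hB hne h
  obtain ⟨x₀, t, hX⟩ := exists_Xmodel_eq_of_quadratic_ne_zero hn hα hB h
  obtain ⟨r, hr, hrα⟩ := exists_normSq_smul_eq_one hα
  refine ⟨r, x₀, _, hr, .special (r • α) (2 * t) hrα, fun x => ?_⟩
  rw [hX, Xmodel_eq, dotp_eq_dotProduct, normSq_eq_dotProduct, smul_dotProduct]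
  simp only [zero_mulVec]
  module

end ModelField

local notation "δ" => (1 : Matrix (Fin _) (Fin _) ℝ)

section PartialDerivatives

variable {n : ℕ} {Ω : Set (Fin n → ℝ)} {f g : (Fin n → ℝ) → ℝ} {x : Fin n → ℝ}

theorem contDiffOn_pdS {m : WithTop ℕ∞} (hΩ : IsOpen Ω) (hf : ContDiffOn ℝ (m + 1) f Ω)
    (j : Fin n) : ContDiffOn ℝ m (pdS f j) Ω :=
  (hf.fderiv_of_isOpen hΩ le_rfl).clm_apply contDiffOn_const

theorem contDiffOn_pd {m : WithTop ℕ∞} (hΩ : IsOpen Ω) {X : (Fin n → ℝ) → Fin n → ℝ}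
    (hX : ContDiffOn ℝ (m + 1) X Ω) (j k : Fin n) : ContDiffOn ℝ m (pd X j k) Ω :=
  contDiffOn_pdS hΩ (contDiffOn_pi.mp hX k) j

theorem pdS_pdS_comm (hΩ : IsOpen Ω) (hf : ContDiffOn ℝ 2 f Ω) (hx : x ∈ Ω) (j k : Fin n) :
    pdS (pdS f j) k x = pdS (pdS f k) j x := by
  have hsymm : IsSymmSndFDerivAt ℝ f x :=
    (hf.contDiffAt (hΩ.mem_nhds hx)).isSymmSndFDerivAt (by simp)
  have hdiff : DifferentiableAt ℝ (fderiv ℝ f) x :=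
    ((hf.fderiv_of_isOpen hΩ (m := 1) (by norm_num)).differentiableOn one_ne_zero).differentiableAt
      (hΩ.mem_nhds hx)
  have pdS_pdS (a b : Fin n) : pdS (pdS f a) b x =
      fderiv ℝ (fderiv ℝ f) x (Pi.single b 1) (Pi.single a 1) := by
    unfold pdS
    simp [fderiv_clm_apply hdiff (differentiableAt_const _)]
  rw [pdS_pdS, pdS_pdS, hsymm]

theorem pdS_congr (hΩ : IsOpen Ω) (h : Set.EqOn f g Ω) (hx : x ∈ Ω) (j : Fin n) :
    pdS f j x = pdS g j x := by
  unfold pdS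
  rw [(h.eventuallyEq_of_mem (hΩ.mem_nhds hx)).fderiv_eq]

theorem pd_congr (hΩ : IsOpen Ω) {X Y : (Fin n → ℝ) → Fin n → ℝ} (h : Set.EqOn X Y Ω) (hx : x ∈ Ω)
    (j k : Fin n) : pd X j k x = pd Y j k x :=
  pdS_congr hΩ (fun _ hy => congrFun (h hy) k) hx j

theorem pdS_add (hf : DifferentiableAt ℝ f x) (hg : DifferentiableAt ℝ g x) (j : Fin n) :
    pdS (fun y => f y + g y) j x = pdS f j x + pdS g j x := by
  simp [pdS, fderiv_fun_add hf hg]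

theorem pdS_sub (hf : DifferentiableAt ℝ f x) (hg : DifferentiableAt ℝ g x) (j : Fin n) :
    pdS (fun y => f y - g y) j x = pdS f j x - pdS g j x := by
  simp [pdS, fderiv_fun_sub hf hg]

theorem pdS_mul (hf : DifferentiableAt ℝ f x) (hg : DifferentiableAt ℝ g x) (j : Fin n) :
    pdS (fun y => f y * g y) j x = f x * pdS g j x + pdS f j x * g x := by
  simp [pdS, fderiv_fun_mul hf hg, mul_comm]

theorem pdS_const (c : ℝ) (j : Fin n) : pdS (fun _ => c) j x = 0 := by
  simp [pdS]

theorem pdS_mul_const (hf : DifferentiableAt ℝ f x) (c : ℝ) (j : Fin n) :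
    pdS (fun y => f y * c) j x = pdS f j x * c := by
  rw [pdS_mul hf (differentiableAt_const c), pdS_const, mul_zero, zero_add]

theorem pdS_eq_of_hasDerivAt {j : Fin n} {d : ℝ} (hf : DifferentiableAt ℝ f x)
    (hd : HasDerivAt (fun t : ℝ => f (x + t • Pi.single j 1)) d 0) : pdS f j x = d := by
  rw [pdS, ← hf.lineDeriv_eq_fderiv, lineDeriv, hd.deriv]

theorem exists_eqOn_add_of_pdS_eq (hΩ : IsOpen Ω) (hconn : IsPreconnected Ω)
    (hf : DifferentiableOn ℝ f Ω) (hg : DifferentiableOn ℝ g Ω)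
    (h : ∀ x ∈ Ω, ∀ j, pdS f j x = pdS g j x) : ∃ c, Set.EqOn f (fun x => g x + c) Ω :=
  hΩ.exists_eq_add_of_fderiv_eq hconn hf hg fun x hx =>
    ContinuousLinearMap.coe_injective <| (Pi.basisFun ℝ (Fin n)).ext fun j => by
      simpa [pdS] using h x hx j

theorem exists_eqOn_const_of_pdS_eq_zero (hΩ : IsOpen Ω) (hconn : IsPreconnected Ω)
    (hf : DifferentiableOn ℝ f Ω) (h : ∀ x ∈ Ω, ∀ j, pdS f j x = 0) :
    ∃ c, Set.EqOn f (fun _ => c) Ω := by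
  simpa using exists_eqOn_add_of_pdS_eq hΩ hconn hf (differentiableOn_const 0)
    fun x hx j => by rw [h x hx, pdS_const]

end PartialDerivatives

section ModelDerivatives

open scoped ContDiff

variable {n : ℕ} (α : Fin n → ℝ) (c : ℝ) (B : Matrix (Fin n) (Fin n) ℝ) (γ : Fin n → ℝ)

theorem contDiff_Xmodel : ContDiff ℝ ω (Xmodel α c B γ) := by
  refine contDiff_pi.mpr fun k => ?_
  unfold Xmodel dotp normSq mulVec dotProduct
  fun_prop

theorem pdS_dotProduct (x : Fin n → ℝ) (j : Fin n) : pdS (fun y => α ⬝ᵥ y) j x = α j := by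
  refine pdS_eq_of_hasDerivAt (by unfold dotProduct; fun_prop) ?_
  simpa [dotProduct_add] using ((hasDerivAt_id (0 : ℝ)).mul_const (α j)).const_add (α ⬝ᵥ x)

theorem pdS_apply (x : Fin n → ℝ) (j k : Fin n) : pdS (fun y => y k) j x = δ j k := by
  simpa [Matrix.one_apply, Pi.single_apply] using pdS_dotProduct (Pi.single k 1) x j

theorem pd_Xmodel (x : Fin n → ℝ) (j k : Fin n) :
    pd (Xmodel α c B γ) j k x =
      (c + α ⬝ᵥ x) * δ j k + B k j + (x k * α j - α k * x j) := by
  have hdiff : DifferentiableAt ℝ (fun y => Xmodel α c B γ y k) x :=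
    (contDiff_pi.mp (contDiff_Xmodel α c B γ) k).differentiable (by simp) x
  have hline (t : ℝ) : Xmodel α c B γ (x + t • Pi.single j 1) k =
      t ^ 2 * (α j * δ j k - 1 / 2 * α k) +
      t * ((c + α ⬝ᵥ x) * δ j k + B k j + (x k * α j - α k * x j)) +
      Xmodel α c B γ x k := by
    have hdelta : (Pi.single j 1 : Fin n → ℝ) k = δ j k := by
      simp [Matrix.one_apply, Pi.single_apply, eq_comm]
    rw [add_comm, Xmodel_add, Xmodel_eq]
    simp only [mulVec_smul, mulVec_single_one, Pi.add_apply, Pi.sub_apply, Pi.smul_apply, col_apply,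
      Matrix.add_apply, wedge, of_apply, dotProduct_smul, dotProduct_single_one,
      Pi.single_eq_same, smul_eq_mul, hdelta]
    ring
  refine pdS_eq_of_hasDerivAt hdiff ?_
  simp only [hline]
  exact HasDerivAt.congr_deriv ((((hasDerivAt_pow 2 (0 : ℝ)).mul_const _).fun_add
    ((hasDerivAt_id' (0 : ℝ)).mul_const _)).add_const _) (by simp)

theorem pd2_Xmodel (x : Fin n → ℝ) (l j k : Fin n) :
    pd2 (Xmodel α c B γ) l j k x = α l * δ j k + α j * δ l k - α k * δ l j := by
  have hdot : DifferentiableAt ℝ (fun y => α ⬝ᵥ y) x := by unfold dotProduct; fun_prop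
  change pdS (pd (Xmodel α c B γ) j k) l x = _
  rw [funext fun y => pd_Xmodel α c B γ y j k]
  simp only [mul_comm (α k)]
  rw [pdS_add (by fun_prop) (by fun_prop), pdS_add (by fun_prop) (by fun_prop),
    pdS_mul_const (by fun_prop), pdS_add (by fun_prop) hdot, pdS_sub (by fun_prop) (by fun_prop),
    pdS_mul_const (by fun_prop), pdS_mul_const (by fun_prop), pdS_const, pdS_const,
    pdS_dotProduct, pdS_apply, pdS_apply]
  ring

end ModelDerivatives

section Liouville

variable {n : ℕ} {Ω : Set (Fin n → ℝ)} {X : (Fin n → ℝ) → Fin n → ℝ} {μ : (Fin n → ℝ) → ℝ}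

/-- `X` is conformal Killing on `Ω` with `∂ⱼXₖ + ∂ₖXⱼ = 2μδⱼₖ`, so that `μ` is the common value of
the diagonal derivatives `∂ⱼXⱼ`. -/
def HasConformalFactor (Ω : Set (Fin n → ℝ)) (X : (Fin n → ℝ) → Fin n → ℝ)
    (μ : (Fin n → ℝ) → ℝ) : Prop :=
  ∀ x ∈ Ω, ∀ j k, pd X j k x + pd X k j x = μ x * (2 * δ j k)

theorem IsCKF.hasConformalFactor (h : IsCKF Ω X) (i : Fin n) :
    HasConformalFactor Ω X (pd X i i) := by
  obtain ⟨lam, hlam⟩ := h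
  intro x hx j k
  have hdiag := hlam x hx i i
  rw [if_pos rfl] at hdiag
  rw [hlam x hx j k, Matrix.one_apply]
  linear_combination -(if j = k then (1 : ℝ) else 0) * hdiag

namespace HasConformalFactor

-- The Christoffel trick: combine three cyclic permutations of the differentiated equation.
theorem pd2_eq (h : HasConformalFactor Ω X μ) (hΩ : IsOpen Ω) (hX : ContDiffOn ℝ 2 X Ω)
    (hμ : DifferentiableOn ℝ μ Ω) {x : Fin n → ℝ} (hx : x ∈ Ω) (l j k : Fin n) :
    pd2 X l j k x = pdS μ l x * δ j k + pdS μ j x * δ l k - pdS μ k x * δ l j := by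
  have hdiff (a b : Fin n) : DifferentiableAt ℝ (pd X a b) x :=
    ((contDiffOn_pd (m := 1) hΩ hX a b).differentiableOn one_ne_zero).differentiableAt
      (hΩ.mem_nhds hx)
  have hderiv (l j k : Fin n) : pd2 X l j k x + pd2 X l k j x = pdS μ l x * (2 * δ j k) := by
    rw [← pdS_mul_const (hμ.differentiableAt (hΩ.mem_nhds hx))]
    exact (pdS_add (hdiff j k) (hdiff k j) l).symm.trans
      (pdS_congr hΩ (fun y hy => h y hy j k) hx l)
  have hcomm (a b c : Fin n) : pd2 X a b c x = pd2 X b a c x :=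
    pdS_pdS_comm hΩ (contDiffOn_pi.mp hX c) hx b a
  linear_combination (hderiv l j k + hderiv j l k - hderiv k l j + hcomm l j k - hcomm l k j -
    hcomm j k l) / 2

theorem pdS_pdS_factor_compat (h : HasConformalFactor Ω X μ) (hΩ : IsOpen Ω)
    (hX : ContDiffOn ℝ 3 X Ω) (hμ : ContDiffOn ℝ 2 μ Ω) {x : Fin n → ℝ} (hx : x ∈ Ω)
    (m l j k : Fin n) :
    pdS (pdS μ j) m x * δ l k - pdS (pdS μ k) m x * δ l j =
      pdS (pdS μ j) l x * δ m k - pdS (pdS μ k) l x * δ m j := by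
  have hdiff (i : Fin n) : DifferentiableAt ℝ (pdS μ i) x :=
    ((contDiffOn_pdS (m := 1) hΩ hμ i).differentiableOn one_ne_zero).differentiableAt
      (hΩ.mem_nhds hx)
  have hthird (m l : Fin n) : pdS (pd2 X l j k) m x =
      pdS (pdS μ l) m x * δ j k + pdS (pdS μ j) m x * δ l k - pdS (pdS μ k) m x * δ l j := by
    rw [pdS_congr hΩ (fun y hy => h.pd2_eq hΩ (hX.of_le (by norm_num))
        (hμ.differentiableOn two_ne_zero) hy l j k) hx m,
      pdS_sub (by fun_prop) (by fun_prop), pdS_add (by fun_prop) (by fun_prop),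
      pdS_mul_const (hdiff l), pdS_mul_const (hdiff j), pdS_mul_const (hdiff k)]
  have hcomm : pdS (pd2 X l j k) m x = pdS (pd2 X m j k) l x :=
    pdS_pdS_comm hΩ (contDiffOn_pd (m := 2) hΩ (hX.of_le (by norm_num)) j k) hx l m
  rw [hthird, hthird, pdS_pdS_comm hΩ hμ hx l m] at hcomm
  linear_combination hcomm

theorem pdS_pdS_factor_eq_zero (h : HasConformalFactor Ω X μ) (hn : 2 < n) (hΩ : IsOpen Ω)
    (hX : ContDiffOn ℝ 3 X Ω) (hμ : ContDiffOn ℝ 2 μ Ω) {x : Fin n → ℝ} (hx : x ∈ Ω)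
    (j m : Fin n) : pdS (pdS μ j) m x = 0 := by
  have compat := h.pdS_pdS_factor_compat hΩ hX hμ hx
  obtain ⟨l, hlj, hlm⟩ := Fin.exists_ne_and_ne_of_two_lt j m hn
  by_cases hjm : j = m
  · subst hjm
    have diag_add_diag {a b : Fin n} (hab : a ≠ b) :
        pdS (pdS μ a) a x + pdS (pdS μ b) b x = 0 := by
      have := compat a b a b
      simp only [one_apply_eq, one_apply_ne hab, one_apply_ne hab.symm] at this
      linear_combination this
    obtain ⟨p, hpj, hpl⟩ := Fin.exists_ne_and_ne_of_two_lt j l hn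
    linear_combination (diag_add_diag hlj + diag_add_diag hpj - diag_add_diag hpl) / 2
  · simpa [hlj, hlm.symm, Ne.symm hjm] using compat m l j l

theorem exists_eqOn_factor (h : HasConformalFactor Ω X μ) (hn : 2 < n) (hΩ : IsOpen Ω)
    (hconn : IsPreconnected Ω) (hX : ContDiffOn ℝ 3 X Ω) (hμ : ContDiffOn ℝ 2 μ Ω) :
    ∃ (α : Fin n → ℝ) (c : ℝ), Set.EqOn μ (fun x => α ⬝ᵥ x + c) Ω := by
  have hgrad (j : Fin n) : ∃ a, Set.EqOn (pdS μ j) (fun _ => a) Ω :=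
    exists_eqOn_const_of_pdS_eq_zero hΩ hconn
      ((contDiffOn_pdS (m := 1) hΩ hμ j).differentiableOn one_ne_zero)
      fun x hx m => h.pdS_pdS_factor_eq_zero hn hΩ hX hμ hx j m
  choose α hα using hgrad
  refine ⟨α, exists_eqOn_add_of_pdS_eq hΩ hconn (hμ.differentiableOn two_ne_zero)
    (by unfold dotProduct; fun_prop) fun x hx j => ?_⟩
  rw [hα j hx, pdS_dotProduct]

end HasConformalFactor

theorem exists_eqOn_Xmodel_of_pd2_eq {α : Fin n → ℝ} (c : ℝ) (hΩ : IsOpen Ω)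
    (hconn : IsPreconnected Ω) (hX : ContDiffOn ℝ 2 X Ω)
    (h : ∀ x ∈ Ω, ∀ l j k, pd2 X l j k x = α l * δ j k + α j * δ l k - α k * δ l j) :
    ∃ (B : Matrix (Fin n) (Fin n) ℝ) (γ : Fin n → ℝ), Set.EqOn X (Xmodel α c B γ) Ω := by
  have hmodel (B : Matrix (Fin n) (Fin n) ℝ) : ContDiffOn ℝ 2 (Xmodel α c B 0) Ω :=
    ((contDiff_Xmodel α c B 0).of_le (by simp)).contDiffOn
  have hfirst (j k : Fin n) :
      ∃ b, Set.EqOn (pd X j k) (fun x => pd (Xmodel α c 0 0) j k x + b) Ω :=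
    exists_eqOn_add_of_pdS_eq hΩ hconn
      ((contDiffOn_pd (m := 1) hΩ hX j k).differentiableOn one_ne_zero)
      ((contDiffOn_pd (m := 1) hΩ (hmodel 0) j k).differentiableOn one_ne_zero)
      fun x hx l => (h x hx l j k).trans (pd2_Xmodel α c 0 0 x l j k).symm
  choose E hE using hfirst
  let B : Matrix (Fin n) (Fin n) ℝ := of fun k j => E j k
  have hzeroth (k : Fin n) :
      ∃ b, Set.EqOn (fun x => X x k) (fun x => Xmodel α c B 0 x k + b) Ω := by
    refine exists_eqOn_add_of_pdS_eq hΩ hconn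
      ((contDiffOn_pi.mp hX k).differentiableOn two_ne_zero)
      ((contDiffOn_pi.mp (hmodel B) k).differentiableOn two_ne_zero) fun x hx j => ?_
    calc pd X j k x = pd (Xmodel α c 0 0) j k x + B k j := hE j k hx
      _ = pd (Xmodel α c B 0) j k x := by
        rw [pd_Xmodel, pd_Xmodel, Matrix.zero_apply]
        ring
  choose γ hγ using hzeroth
  refine ⟨B, γ, fun x hx => funext fun k => ?_⟩
  simpa [Xmodel] using hγ k hx

theorem IsCKF.exists_eqOn_Xmodel (h : IsCKF Ω X) (hn : 2 < n) (hΩ : IsOpen Ω)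
    (hconn : IsConnected Ω) (hX : ContDiffOn ℝ 3 X Ω) :
    ∃ (α : Fin n → ℝ) (c : ℝ) (B : Matrix (Fin n) (Fin n) ℝ) (γ : Fin n → ℝ),
      Bᵀ = -B ∧ Set.EqOn X (Xmodel α c B γ) Ω := by
  let i : Fin n := ⟨0, by omega⟩
  have hfactor := h.hasConformalFactor i
  have hμ : ContDiffOn ℝ 2 (pd X i i) Ω := contDiffOn_pd hΩ (hX.of_le (by norm_num)) i i
  have hX2 : ContDiffOn ℝ 2 X Ω := hX.of_le (by norm_num)
  obtain ⟨α, c, hαc⟩ := hfactor.exists_eqOn_factor hn hΩ hconn.isPreconnected hX hμ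
  have hgrad {x : Fin n → ℝ} (hx : x ∈ Ω) (j : Fin n) : pdS (pd X i i) j x = α j := by
    rw [pdS_congr hΩ hαc hx, pdS_add (by unfold dotProduct; fun_prop) (by fun_prop),
      pdS_dotProduct, pdS_const, add_zero]
  obtain ⟨B, γ, hXB⟩ := exists_eqOn_Xmodel_of_pd2_eq c hΩ hconn.isPreconnected hX2
    fun x hx l j k => by
      rw [hfactor.pd2_eq hΩ hX2 (hμ.differentiableOn two_ne_zero) hx, hgrad hx, hgrad hx, hgrad hx]
  refine ⟨α, c, B, γ, ?_, hXB⟩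
  obtain ⟨p, hp⟩ := hconn.nonempty
  ext j k
  have := hfactor p hp j k
  rw [pd_congr hΩ hXB hp, pd_congr hΩ hXB hp, hαc hp, pd_Xmodel, pd_Xmodel,
    ← Matrix.transpose_apply (1 : Matrix (Fin n) (Fin n) ℝ) j k, transpose_one] at this
  rw [transpose_apply, Matrix.neg_apply]
  linear_combination this

end Liouville

section HypersurfaceOrthogonal

variable {n : ℕ} {Ω : Set (Fin n → ℝ)} {X : (Fin n → ℝ) → Fin n → ℝ}

/-- The exterior derivative of the 1-form dual to `X`, as the skew-symmetric matrix
`∂ⱼXₖ - ∂ₖXⱼ`. -/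
def extDerivMatrix (X : (Fin n → ℝ) → Fin n → ℝ) (x : Fin n → ℝ) : Matrix (Fin n) (Fin n) ℝ :=
  of fun j k => pd X j k x - pd X k j x

/-- The Frobenius condition `X♭ ∧ dX♭ = 0` on `Ω`: where `X` does not vanish, its orthogonal
hyperplanes are tangent to a foliation by hypersurfaces. -/
def IsHypersurfaceOrthogonal (Ω : Set (Fin n → ℝ)) (X : (Fin n → ℝ) → Fin n → ℝ) : Prop :=
  ∀ x ∈ Ω, WedgeVanishes (extDerivMatrix X x) (X x)

theorem isHypersurfaceOrthogonal_smul_grad {f φ : (Fin n → ℝ) → ℝ} (hΩ : IsOpen Ω)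
    (hf : DifferentiableOn ℝ f Ω) (hφ : ContDiffOn ℝ 2 φ Ω) :
    IsHypersurfaceOrthogonal Ω fun x => f x • grad φ x := by
  intro x hx j k l
  have hpd (a b : Fin n) : pd (fun x => f x • grad φ x) a b x =
      f x * pdS (pdS φ b) a x + pdS f a x * grad φ x b :=
    pdS_mul (hf.differentiableAt (hΩ.mem_nhds hx))
      (((contDiffOn_pdS (m := 1) hΩ hφ b).differentiableOn one_ne_zero).differentiableAt
        (hΩ.mem_nhds hx)) a
  have hcomm := pdS_pdS_comm hΩ hφ hx
  simp only [extDerivMatrix, of_apply, hpd, Pi.smul_apply, smul_eq_mul, hcomm k j, hcomm l k,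
    hcomm j l]
  ring

theorem contDiffOn_grad {φ : (Fin n → ℝ) → ℝ} {m : WithTop ℕ∞} (hΩ : IsOpen Ω)
    (hφ : ContDiffOn ℝ (m + 1) φ Ω) : ContDiffOn ℝ m (grad φ) Ω :=
  contDiffOn_pi.mpr (contDiffOn_pdS hΩ hφ)

theorem contDiffOn_inv_normSq_grad {φ : (Fin n → ℝ) → ℝ} {m : WithTop ℕ∞} (hΩ : IsOpen Ω)
    (hφ : ContDiffOn ℝ (m + 1) φ Ω) (hgrad : ∀ x ∈ Ω, grad φ x ≠ 0) :
    ContDiffOn ℝ m (fun x => (normSq (grad φ x))⁻¹) Ω := by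
  refine ContDiffOn.inv ?_ fun x hx => normSq_ne_zero (hgrad x hx)
  unfold normSq
  exact ContDiffOn.sum fun i _ => (contDiffOn_pdS hΩ hφ i).pow 2

theorem extDerivMatrix_Xmodel (α : Fin n → ℝ) (c : ℝ) {B : Matrix (Fin n) (Fin n) ℝ}
    (hB : Bᵀ = -B) (γ x : Fin n → ℝ) :
    extDerivMatrix (Xmodel α c B γ) x = (2 : ℝ) • (wedge α x - B) := by
  ext j k
  have hskew : B k j = -B j k := congrFun₂ hB j k
  have hdelta : δ k j = δ j k :=
    congrFun₂ transpose_one j k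
  simp only [extDerivMatrix, of_apply, pd_Xmodel, hskew, hdelta, wedge, Matrix.smul_apply,
    Matrix.sub_apply, smul_eq_mul]
  ring

theorem IsHypersurfaceOrthogonal.wedgeVanishes_of_eqOn_Xmodel (h : IsHypersurfaceOrthogonal Ω X)
    (hΩ : IsOpen Ω) (hne : Ω.Nonempty) {α γ : Fin n → ℝ} {c : ℝ} {B : Matrix (Fin n) (Fin n) ℝ}
    (hB : Bᵀ = -B) (hX : Set.EqOn X (Xmodel α c B γ) Ω) (y : Fin n → ℝ) :
    WedgeVanishes (wedge α y - B) (Xmodel α c B γ y) := by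
  obtain ⟨p, hp⟩ := hne
  intro j k l
  let F (y : Fin n → ℝ) : ℝ := (wedge α y - B) j k * Xmodel α c B γ y l +
    (wedge α y - B) k l * Xmodel α c B γ y j + (wedge α y - B) l j * Xmodel α c B γ y k
  have hF : AnalyticOnNhd ℝ F Set.univ := by
    have hmodel := contDiff_pi.mp (contDiff_Xmodel α c B γ)
    have : ContDiff ℝ ⊤ F := by
      simp only [F, wedge, Matrix.sub_apply, of_apply]
      fun_prop
    exact fun x _ => this.contDiffAt.analyticAt
  have hFΩ : Set.EqOn F 0 Ω := fun x hx => by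
    have hext : extDerivMatrix X x = (2 : ℝ) • (wedge α x - B) := by
      rw [← extDerivMatrix_Xmodel α c hB γ]
      ext a b
      simp only [extDerivMatrix, of_apply, pd_congr hΩ hX hx]
    have := h x hx j k l
    simp only [hext, hX hx, Matrix.smul_apply, smul_eq_mul] at this
    simp only [F, Pi.zero_apply]
    linear_combination this / 2
  -- `F` is polynomial, so it vanishes everywhere once it vanishes on an open set.
  exact congrFun (hF.eq_of_eventuallyEq analyticOnNhd_const
    (hFΩ.eventuallyEq_of_mem (hΩ.mem_nhds hp))) y

theorem IsCKF.exists_isNormalForm (hckf : IsCKF Ω X) (horth : IsHypersurfaceOrthogonal Ω X)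
    (hn : 2 < n) (hΩ : IsOpen Ω) (hconn : IsConnected Ω) (hX : ContDiffOn ℝ 3 X Ω)
    (hne : ∃ x ∈ Ω, X x ≠ 0) :
    ∃ (a : ℝ) (x₀ : Fin n → ℝ) (Y : (Fin n → ℝ) → Fin n → ℝ),
      a ≠ 0 ∧ IsNormalForm Y ∧ ∀ x ∈ Ω, a • X x = Y (x - x₀) := by
  obtain ⟨α, c, B, γ, hB, hXmodel⟩ := hckf.exists_eqOn_Xmodel hn hΩ hconn hX
  obtain ⟨p, hp, hXp⟩ := hne
  obtain ⟨a, x₀, Y, ha, hY, haY⟩ := exists_isNormalForm_Xmodel hn hB ⟨p, hXmodel hp ▸ hXp⟩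
    (horth.wedgeVanishes_of_eqOn_Xmodel hΩ hconn.nonempty hB hXmodel)
  exact ⟨a, x₀, Y, ha, hY, fun x hx => by rw [hXmodel hx, haY]⟩

end HypersurfaceOrthogonal

theorem stmt_11_general {n : ℕ} (hn : 3 ≤ n) {Ω : Set (Fin n → ℝ)} (hΩ : IsOpen Ω)
    (hconn : IsConnected Ω) {X : (Fin n → ℝ) → Fin n → ℝ} (hX : ContDiffOn ℝ 3 X Ω)
    (hckf : IsCKF Ω X) (horth : IsHypersurfaceOrthogonal Ω X) (hne : ∃ x ∈ Ω, X x ≠ 0) :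
    ∃ (a : ℝ) (x₀ : Fin n → ℝ), a ≠ 0 ∧
      ((∃ γ : Fin n → ℝ, normSq γ = 1 ∧ ∀ x ∈ Ω, a • X x = γ) ∨
       (∀ x ∈ Ω, a • X x = x - x₀) ∨
       (∃ γ σ : Fin n → ℝ, normSq γ = 1 ∧ normSq σ = 1 ∧ dotp γ σ = 0 ∧
          ∀ x ∈ Ω, a • X x = wedge γ σ *ᵥ (x - x₀)) ∨
       (∃ γ : Fin n → ℝ, normSq γ = 1 ∧
          ∀ x ∈ Ω, a • X x
            = dotp γ (x - x₀) • (x - x₀) - ((1 / 2) * normSq (x - x₀)) • γ) ∨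
       (∃ (γ : Fin n → ℝ) (s : ℝ), normSq γ = 1 ∧ 0 < s ∧
          ∀ x ∈ Ω, a • X x
            = dotp γ (x - x₀) • (x - x₀) - ((1 / 2) * normSq (x - x₀)) • γ + (s / 2) • γ) ∨
       (∃ (γ : Fin n → ℝ) (s : ℝ), normSq γ = 1 ∧ 0 < s ∧
          ∀ x ∈ Ω, a • X x
            = dotp γ (x - x₀) • (x - x₀) - ((1 / 2) * normSq (x - x₀)) • γ - (s / 2) • γ)) := by
  obtain ⟨a, x₀, Y, ha, hY, haY⟩ := hckf.exists_isNormalForm horth hn hΩ hconn hX hne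
  refine ⟨a, x₀, ha, ?_⟩
  cases hY with
  | translation γ hγ => exact .inl ⟨γ, hγ, haY⟩
  | dilation => exact .inr <| .inl haY
  | rotation γ σ hγ hσ hγσ => exact .inr <| .inr <| .inl ⟨γ, σ, hγ, hσ, hγσ, haY⟩
  | special γ s hγ =>
    refine .inr <| .inr <| .inr ?_
    rcases lt_trichotomy s 0 with hs | rfl | hs
    · refine .inr <| .inr ⟨γ, -s, hγ, neg_pos.mpr hs, fun x hx => ?_⟩
      rw [haY x hx, neg_div, neg_smul, sub_neg_eq_add]
    · exact .inl ⟨γ, hγ, fun x hx => by simpa using haY x hx⟩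
    · exact .inr <| .inl ⟨γ, s, hγ, hs, haY⟩

/-- classification of limiting Carleman weights in `ℝⁿ`, `n ≥ 3`, in terms
of their associated conformal Killing vector fields: up to a scaling `a ≠ 0` and a
translation by `x₀`, the field `|∇φ|⁻²∇φ` of any LCW `φ` is one of six model fields. -/
theorem stmt_11 {n : ℕ} (hn : 3 ≤ n) (Ω : Set (Fin n → ℝ)) (hΩ : IsOpen Ω)
    (hconn : IsConnected Ω) (φ : (Fin n → ℝ) → ℝ) (hφ : ContDiffOn ℝ (⊤ : ℕ∞) φ Ω)
    (hgrad : ∀ x ∈ Ω, grad φ x ≠ 0)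
    (hckf : IsCKF Ω (fun x => (normSq (grad φ x))⁻¹ • grad φ x)) :
    ∃ (a : ℝ) (x₀ : Fin n → ℝ), a ≠ 0 ∧
      ((∃ γ : Fin n → ℝ, normSq γ = 1 ∧
          ∀ x ∈ Ω, a • ((normSq (grad φ x))⁻¹ • grad φ x) = γ) ∨
       (∀ x ∈ Ω, a • ((normSq (grad φ x))⁻¹ • grad φ x) = x - x₀) ∨
       (∃ γ σ : Fin n → ℝ, normSq γ = 1 ∧ normSq σ = 1 ∧ dotp γ σ = 0 ∧
          ∀ x ∈ Ω, a • ((normSq (grad φ x))⁻¹ • grad φ x)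
            = (wedge γ σ).mulVec (x - x₀)) ∨
       (∃ γ : Fin n → ℝ, normSq γ = 1 ∧
          ∀ x ∈ Ω, a • ((normSq (grad φ x))⁻¹ • grad φ x)
            = dotp γ (x - x₀) • (x - x₀) - ((1 / 2) * normSq (x - x₀)) • γ) ∨
       (∃ (γ : Fin n → ℝ) (s : ℝ), normSq γ = 1 ∧ 0 < s ∧
          ∀ x ∈ Ω, a • ((normSq (grad φ x))⁻¹ • grad φ x)
            = dotp γ (x - x₀) • (x - x₀) - ((1 / 2) * normSq (x - x₀)) • γ
              + (s / 2) • γ) ∨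
       (∃ (γ : Fin n → ℝ) (s : ℝ), normSq γ = 1 ∧ 0 < s ∧
          ∀ x ∈ Ω, a • ((normSq (grad φ x))⁻¹ • grad φ x)
            = dotp γ (x - x₀) • (x - x₀) - ((1 / 2) * normSq (x - x₀)) • γ
              - (s / 2) • γ)) := by
  have hφ4 : ContDiffOn ℝ (3 + 1) φ Ω := hφ.of_le (WithTop.coe_le_coe.mpr (le_top : (4 : ℕ∞) ≤ ⊤))
  have hf := contDiffOn_inv_normSq_grad hΩ hφ4 hgrad
  obtain ⟨p, hp⟩ := hconn.nonempty
  exact stmt_11_general hn hΩ hconn (hf.smul (contDiffOn_grad hΩ hφ4)) hckf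
    (isHypersurfaceOrthogonal_smul_grad hΩ (hf.differentiableOn three_ne_zero)
      (hφ4.of_le (by norm_num)))
    ⟨p, hp, smul_ne_zero (inv_ne_zero (normSq_ne_zero (hgrad p hp))) (hgrad p hp)⟩
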